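/- arXiv:1410.0786 — 2 statements merged into one kernel-verified Lean document; each statement's English description precedes it below -/
import Mathlib

section
/- Let 0 ≤ s < t ≤ T and m, n ≥ 1 be integers, and let f : Λ^m_{s,t} → ℝ and g : Λ^n_{s,t} → ℝ be Lebesgue-integrable. Then (∫_{Λ^m_{s,t}} f(u) du) · (∫_{Λ^n_{s,t}} g(u) du) = Σ_{σ ∈ S(m,n)} ∫_{Λ^{m+n}_{s,t}} f(u_{σ(1)}, …, u_{σ(m)}) g(u_{σ(m+1)}, …, u_{σ(m+n)}) du₁ ⋯ du_{m+n}. -/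
open MeasureTheory

/-- The open simplex `Λ^m_{s,t} = {u ∈ ℝ^m : s < u₁ < ⋯ < u_m < t}`. -/
def simplexSet (m : ℕ) (s t : ℝ) : Set (Fin m → ℝ) :=
  {u | StrictMono u ∧ ∀ i, u i ∈ Set.Ioo s t}

/-- Reindexing by an equivalence, as a measurable equivalence. -/
noncomputable def reindexME {ι κ : Type} (e : ι ≃ κ) : (κ → ℝ) ≃ᵐ (ι → ℝ) :=
  (MeasurableEquiv.piCongrLeft (fun _ : κ => ℝ) e).symm

lemma reindexME_apply {ι κ : Type} (e : ι ≃ κ) (v : κ → ℝ) : reindexME e v = v ∘ e := rfl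

lemma reindexME_mp {ι κ : Type} [Fintype ι] [Fintype κ] (e : ι ≃ κ) :
    MeasurePreserving (reindexME e) volume volume :=
  (volume_measurePreserving_piCongrLeft (fun _ : κ => ℝ) e).symm

/-- Splitting a vector into the first `m` and the last `n` coordinates. -/
noncomputable def splitME (m n : ℕ) :
    (Fin (m + n) → ℝ) ≃ᵐ (Fin m → ℝ) × (Fin n → ℝ) :=
  (reindexME finSumFinEquiv).trans (MeasurableEquiv.sumPiEquivProdPi fun _ => ℝ)

lemma splitME_apply (m n : ℕ) (v : Fin (m + n) → ℝ) :
    splitME m n v = (fun i => v (Fin.castAdd n i), fun j => v (Fin.natAdd m j)) := rfl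

lemma splitME_mp (m n : ℕ) : MeasurePreserving (splitME m n) volume volume :=
  (reindexME_mp finSumFinEquiv).trans (volume_measurePreserving_sumPiEquivProdPi fun _ => ℝ)

lemma measurableSet_simplexSet (m : ℕ) (s t : ℝ) : MeasurableSet (simplexSet m s t) := by
  have : simplexSet m s t = (⋂ i : Fin m, ⋂ j : Fin m, ⋂ _ : i < j, {u | u i < u j}) ∩
      ⋂ i : Fin m, {u | u i ∈ Set.Ioo s t} := by
    ext u
    simp only [simplexSet, Set.mem_inter_iff, Set.mem_iInter, Set.mem_setOf_eq]
    exact Iff.rfl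
  rw [this]
  refine MeasurableSet.inter ?_ ?_
  · refine MeasurableSet.iInter fun i => MeasurableSet.iInter fun j => MeasurableSet.iInter fun _ =>
      measurableSet_lt (measurable_pi_apply i) (measurable_pi_apply j)
  · exact MeasurableSet.iInter fun i => measurable_pi_apply i measurableSet_Ioo

lemma ae_injective (k : ℕ) : ∀ᵐ v : Fin k → ℝ, Function.Injective v := by
  have h : ∀ i j : Fin k, i ≠ j → ∀ᵐ v : Fin k → ℝ, v i ≠ v j := by
    intro i j hij
    have h0 := Measure.addHaar_submodule (volume : Measure (Fin k → ℝ))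
      (LinearMap.ker ((LinearMap.proj i : (Fin k → ℝ) →ₗ[ℝ] ℝ) - LinearMap.proj j)) (by
        intro htop
        have : (Pi.single i 1 : Fin k → ℝ) ∈
          LinearMap.ker ((LinearMap.proj i : (Fin k → ℝ) →ₗ[ℝ] ℝ) - LinearMap.proj j) := by
          rw [htop]; trivial
        simp [hij.symm] at this)
    rw [ae_iff]
    convert h0 using 2
    ext v
    simp [sub_eq_zero]
  have h' : ∀ᵐ v : Fin k → ℝ, ∀ i j : Fin k, i ≠ j → v i ≠ v j := by
    rw [ae_all_iff]; intro i
    rw [ae_all_iff]; intro j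
    by_cases hij : i = j
    · simp [hij]
    · filter_upwards [h i j hij] with v hv _ using hv
  filter_upwards [h'] with v hv i j hvij
  by_contra hne
  exact hv i j hne hvij

open Classical in
/-- The shuffle-product formula:
`(∫_{Λ^m_{s,t}} f)(∫_{Λ^n_{s,t}} g) = Σ_{σ ∈ S(m,n)} ∫_{Λ^{m+n}_{s,t}} f(u_{σ(1:m)}) g(u_{σ(m+1:m+n)}) du`,
where `S(m,n)` is the set of shuffle permutations of `{1, …, m+n}` that are increasing
on the first `m` and on the last `n` indices. -/
theorem integral_simplex_mul_integral_simplex_eq_sum_shuffles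
    (T : ℝ) (hT : 0 < T) (s t : ℝ) (hs : 0 ≤ s) (hst : s < t) (htT : t ≤ T)
    (m n : ℕ) (hm : 1 ≤ m) (hn : 1 ≤ n)
    (f : (Fin m → ℝ) → ℝ) (g : (Fin n → ℝ) → ℝ)
    (hf : IntegrableOn f (simplexSet m s t))
    (hg : IntegrableOn g (simplexSet n s t)) :
    (∫ u in simplexSet m s t, f u) * (∫ u in simplexSet n s t, g u) =
      ∑ σ : Equiv.Perm (Fin (m + n)),
        if (StrictMono fun i : Fin m => σ (Fin.castAdd n i)) ∧
            (StrictMono fun j : Fin n => σ (Fin.natAdd m j)) then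
          ∫ u in simplexSet (m + n) s t,
            f (fun i : Fin m => u (σ (Fin.castAdd n i))) *
              g (fun j : Fin n => u (σ (Fin.natAdd m j)))
        else 0 := by
  set F : (Fin (m + n) → ℝ) → ℝ := fun v =>
    f (fun i => v (Fin.castAdd n i)) * g (fun j => v (Fin.natAdd m j)) with hF
  set P : Set (Fin (m + n) → ℝ) :=
    splitME m n ⁻¹' (simplexSet m s t ×ˢ simplexSet n s t) with hP
  let A : Equiv.Perm (Fin (m + n)) → Set (Fin (m + n) → ℝ) := fun σ =>
    reindexME σ.symm ⁻¹' simplexSet (m + n) s t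
  let S : Finset (Equiv.Perm (Fin (m + n))) := Finset.univ.filter fun σ =>
    (StrictMono fun i : Fin m => σ (Fin.castAdd n i)) ∧
      (StrictMono fun j : Fin n => σ (Fin.natAdd m j))
  have hL : (∫ u in simplexSet m s t, f u) * (∫ u in simplexSet n s t, g u) = ∫ v in P, F v := by
    rw [← setIntegral_prod_mul]
    exact ((splitME_mp m n).setIntegral_preimage_emb (splitME m n).measurableEmbedding
      (fun z => f z.1 * g z.2) _).symm
  have hFi : IntegrableOn F P := by
    have h1 : IntegrableOn (fun z : (Fin m → ℝ) × (Fin n → ℝ) => f z.1 * g z.2)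
        (simplexSet m s t ×ˢ simplexSet n s t) (volume.prod volume) := by
      rw [IntegrableOn, ← Measure.prod_restrict]
      exact Integrable.mul_prod hf hg
    exact ((splitME_mp m n).integrableOn_comp_preimage
      (splitME m n).measurableEmbedding).2 h1
  have hAmem : ∀ σ v, v ∈ A σ ↔ StrictMono (v ∘ σ.symm) ∧ ∀ i, v (σ.symm i) ∈ Set.Ioo s t :=
    fun σ v => Iff.rfl
  have hPmem : ∀ v, v ∈ P ↔
      ((StrictMono fun i : Fin m => v (Fin.castAdd n i)) ∧
        ∀ i : Fin m, v (Fin.castAdd n i) ∈ Set.Ioo s t) ∧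
      ((StrictMono fun i : Fin n => v (Fin.natAdd m i)) ∧
        ∀ i : Fin n, v (Fin.natAdd m i) ∈ Set.Ioo s t) := fun v => Iff.rfl
  have hlt : ∀ σ v, v ∈ A σ → ∀ a b, σ a < σ b ↔ v a < v b := by
    intro σ v hv a b
    have := hv.1.lt_iff_lt (a := σ a) (b := σ b)
    rw [← this]
    simp [reindexME_apply]
  have hsub : ∀ σ ∈ S, A σ ⊆ P := by
    intro σ hσ v hv
    have hσ' := (Finset.mem_filter.1 hσ).2
    rw [hPmem]
    have hI : ∀ a, v a ∈ Set.Ioo s t := fun a => by simpa using ((hAmem σ v).1 hv).2 (σ a)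
    exact ⟨⟨fun i j hij => (hlt σ v hv _ _).1 (hσ'.1 hij), fun i => hI _⟩,
      ⟨fun i j hij => (hlt σ v hv _ _).1 (hσ'.2 hij), fun i => hI _⟩⟩
  have hU : P =ᵐ[volume] ⋃ σ ∈ S, A σ := by
    rw [Filter.eventuallyEq_set]
    filter_upwards [ae_injective (m + n)] with v hv
    constructor
    · intro hvP
      rw [hPmem] at hvP
      have hmem : v ∈ A (Tuple.sort v).symm := by
        rw [hAmem]
        refine ⟨(Tuple.monotone_sort v).strictMono_of_injective
          (hv.comp (Tuple.sort v).injective), fun i => ?_⟩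
        generalize (Tuple.sort v).symm.symm i = a
        induction a using Fin.addCases with
        | left i => exact hvP.1.2 i
        | right i => exact hvP.2.2 i
      simp only [Set.mem_iUnion]
      refine ⟨_, Finset.mem_filter.2 ⟨Finset.mem_univ _, ?_, ?_⟩, hmem⟩
      · intro i j hij
        exact (hlt _ v hmem _ _).2 (hvP.1.1 hij)
      · intro i j hij
        exact (hlt _ v hmem _ _).2 (hvP.2.1 hij)
    · intro h
      simp only [Set.mem_iUnion] at h
      obtain ⟨σ, hσ, h⟩ := h
      exact hsub σ hσ h
  have hdisj : Set.Pairwise (S : Set (Equiv.Perm (Fin (m + n)))) (Function.onFun Disjoint A) := by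
    intro σ _ τ _ hne
    refine Set.disjoint_left.2 fun v h1 h2 => hne ?_
    have h := Tuple.unique_monotone (f := v) ((hAmem _ _).1 h1).1.monotone
      ((hAmem _ _).1 h2).1.monotone
    have hinj : Function.Injective v := by
      intro a b hab
      by_contra hn
      rcases lt_or_gt_of_ne (fun h => hn (σ.injective h)) with h | h
      · exact absurd ((hlt σ v h1 _ _).1 h) (by simp [hab])
      · exact absurd ((hlt σ v h1 _ _).1 h) (by simp [hab])
    have : σ.symm = τ.symm := Equiv.ext fun i => hinj (congrFun h i)
    simpa using congrArg Equiv.symm this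
  rw [hL, setIntegral_congr_set hU, integral_biUnion_finset S
    (fun σ _ => (reindexME σ.symm).measurable (measurableSet_simplexSet _ _ _)) hdisj
    (fun σ hσ => hFi.mono_set (hsub σ hσ)), Finset.sum_filter]
  refine Finset.sum_congr rfl fun σ _ => ?_
  congr 1
  rw [← (reindexME_mp σ).setIntegral_preimage_emb (reindexME σ).measurableEmbedding F (A σ)]
  have : reindexME σ ⁻¹' A σ = simplexSet (m + n) s t := by
    ext u
    have h : reindexME σ.symm (reindexME σ u) = u := by
      ext i; simp [reindexME_apply]
    change reindexME σ.symm (reindexME σ u) ∈ simplexSet (m + n) s t ↔ _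
    rw [h]
  rw [this]
  rfl
end

section
/- For every t ∈ [0,T], the map x ↦ φ_{0,t}(x) is k times continuously differentiable on ℝ^d. -/
open MeasureTheory intervalIntegral

open Filter Topology BoundedContinuousFunction ENNReal in
lemma nem_hasFDerivAt {E G H : Type} [NormedAddCommGroup E] [NormedSpace ℝ E]
    [SecondCountableTopology E]
    [NormedAddCommGroup G] [NormedSpace ℝ G] [NormedAddCommGroup H] [NormedSpace ℝ H]
    (μ : Measure ℝ) [IsFiniteMeasure μ] (g : ℝ → E → G) (g' : ℝ → E → H)
    (L : H →L[ℝ] E →L[ℝ] G) (M : ℝ)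
    (hg : ∀ y : ℝ →ᵇ E, MemLp (fun u => g u (y u)) 1 μ)
    (hg' : ∀ y : ℝ →ᵇ E, MemLp (fun u => g' u (y u)) 1 μ)
    (hd : ∀ᵐ u ∂μ, ∀ x, HasFDerivAt (g u) (L (g' u x)) x)
    (hb : ∀ᵐ u ∂μ, ∀ x, ‖L (g' u x)‖ ≤ M) (y : ℝ →ᵇ E) :
    HasFDerivAt (fun y : ℝ →ᵇ E => (hg y).toLp _)
      (((L.holderL μ 1 ∞ 1) ((hg' y).toLp _)).comp
        (BoundedContinuousFunction.toLp ∞ μ ℝ)) y := by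
  rw [hasFDerivAt_iff_tendsto]
  have key : ∀ z : ℝ →ᵇ E, ‖(hg z).toLp _ - (hg y).toLp _ -
      (((L.holderL μ 1 ∞ 1) ((hg' y).toLp _)).comp
        (BoundedContinuousFunction.toLp ∞ μ ℝ)) (z - y)‖
      = ∫ u, ‖g u (z u) - g u (y u) - L (g' u (y u)) (z u - y u)‖ ∂μ := by
    intro z
    rw [L1.norm_eq_integral_norm]
    apply MeasureTheory.integral_congr_ae
    filter_upwards [Lp.coeFn_sub ((hg z).toLp _ - (hg y).toLp _)
      ((((L.holderL μ 1 ∞ 1) ((hg' y).toLp _)).comp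
        (BoundedContinuousFunction.toLp ∞ μ ℝ)) (z - y)),
      Lp.coeFn_sub ((hg z).toLp _) ((hg y).toLp _), (hg z).coeFn_toLp, (hg y).coeFn_toLp,
      (hg' y).coeFn_toLp,
      L.coeFn_holder (r := 1) ((hg' y).toLp _) (BoundedContinuousFunction.toLp ∞ μ ℝ (z - y)),
      BoundedContinuousFunction.coeFn_toLp (p := ∞) (μ := μ) ℝ (z - y)]
      with u h1 h2 h3 h4 h5 h6 h7
    rw [h1, Pi.sub_apply, h2, Pi.sub_apply, h3, h4]
    simp only [ContinuousLinearMap.comp_apply, ContinuousLinearMap.holderL_apply_apply]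
    rw [h6, h5, h7]
    rfl
  simp_rw [key, ← MeasureTheory.integral_const_mul]
  have h0 : (0 : ℝ) = ∫ u, (0 : ℝ) ∂μ := by simp
  rw [h0]
  apply MeasureTheory.tendsto_integral_filter_of_dominated_convergence (fun _ => 2 * M)
  · filter_upwards with z
    have h1 : AEStronglyMeasurable (fun u => L (g' u (y u)) (z u - y u)) μ := by
      have hB : AEStronglyMeasurable (fun u => z u - y u) μ :=
        (z.continuous.sub y.continuous).aestronglyMeasurable
      exact L.aestronglyMeasurable_comp₂ (hg' y).1 hB
    exact ((((hg z).1.sub (hg y).1).sub h1).norm).const_mul _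
  · filter_upwards with z
    filter_upwards [hd, hb] with u hd hb
    have hlip : ‖g u (z u) - g u (y u)‖ ≤ M * ‖z u - y u‖ :=
      convex_univ.norm_image_sub_le_of_norm_hasFDerivWithin_le
        (fun x _ => (hd x).hasFDerivWithinAt) (fun x _ => hb x) (Set.mem_univ _) (Set.mem_univ _)
    have h2 : ‖L (g' u (y u)) (z u - y u)‖ ≤ M * ‖z u - y u‖ :=
      (ContinuousLinearMap.le_opNorm _ _).trans (by gcongr; exact hb _)
    have h3 : ‖z u - y u‖ ≤ ‖z - y‖ := (z - y).norm_coe_le_norm u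
    have hM : 0 ≤ M := (norm_nonneg _).trans (hb (y u))
    have h4 : ‖g u (z u) - g u (y u) - L (g' u (y u)) (z u - y u)‖ ≤ ‖z - y‖ * (2 * M) := by
      refine (norm_sub_le _ _).trans ?_
      nlinarith
    rw [norm_mul, norm_inv, norm_norm, norm_norm]
    exact inv_mul_le_of_le_mul₀ (norm_nonneg _) (by positivity) h4
  · exact integrable_const _
  · filter_upwards [hd] with u hd
    have h1 := hasFDerivAt_iff_tendsto.1 (hd (y u))
    have h2 : Tendsto (fun z : ℝ →ᵇ E => z u) (𝓝 y) (𝓝 (y u)) :=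
      (continuous_eval_const u).tendsto y
    refine squeeze_zero (fun z => by positivity) (fun z => ?_) (h1.comp h2)
    simp only [Function.comp]
    rcases eq_or_ne (z u) (y u) with h | h
    · simp [h]
    · have h3 : ‖z u - y u‖ ≤ ‖z - y‖ := (z - y).norm_coe_le_norm u
      have h4 : 0 < ‖z u - y u‖ := norm_pos_iff.2 (sub_ne_zero.2 h)
      gcongr

open Filter Topology BoundedContinuousFunction ENNReal in
lemma nem_continuous {E G : Type} [NormedAddCommGroup E] [NormedSpace ℝ E]
    [NormedAddCommGroup G] [NormedSpace ℝ G]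
    (μ : Measure ℝ) [IsFiniteMeasure μ] (g : ℝ → E → G) (M : ℝ)
    (hg : ∀ y : ℝ →ᵇ E, MemLp (fun u => g u (y u)) 1 μ)
    (hc : ∀ᵐ u ∂μ, Continuous (g u))
    (hb : ∀ᵐ u ∂μ, ∀ x, ‖g u x‖ ≤ M) :
    Continuous (fun y : ℝ →ᵇ E => (hg y).toLp _) := by
  rw [continuous_iff_continuousAt]
  intro y
  rw [ContinuousAt, tendsto_iff_norm_sub_tendsto_zero]
  have key : ∀ z : ℝ →ᵇ E, ‖(hg z).toLp _ - (hg y).toLp _‖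
      = ∫ u, ‖g u (z u) - g u (y u)‖ ∂μ := by
    intro z
    rw [L1.norm_eq_integral_norm]
    apply MeasureTheory.integral_congr_ae
    filter_upwards [
      Lp.coeFn_sub ((hg z).toLp _) ((hg y).toLp _), (hg z).coeFn_toLp, (hg y).coeFn_toLp]
      with u h2 h3 h4
    rw [h2, Pi.sub_apply, h3, h4]
  simp_rw [key]
  have h0 : (0 : ℝ) = ∫ u, (0 : ℝ) ∂μ := by simp
  rw [h0]
  apply MeasureTheory.tendsto_integral_filter_of_dominated_convergence (fun _ => 2 * M)
  · filter_upwards with z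
    exact ((hg z).1.sub (hg y).1).norm
  · filter_upwards with z
    filter_upwards [hb] with u hb
    rw [norm_norm]
    refine (norm_sub_le _ _).trans ?_
    linarith [hb (z u), hb (y u)]
  · exact integrable_const _
  · filter_upwards [hc] with u hc
    have h2 : Tendsto (fun z : ℝ →ᵇ E => g u (z u)) (𝓝 y) (𝓝 (g u (y u))) :=
      (hc.comp (continuous_eval_const u)).tendsto y
    exact tendsto_iff_norm_sub_tendsto_zero.1 h2

open ENNReal in
lemma prim_bound {G : Type} [NormedAddCommGroup G] [NormedSpace ℝ G]
    (T : ℝ) (hT : 0 ≤ T) (f : Lp G 1 (volume.restrict (Set.Ioc 0 T))) (r : ℝ) :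
    ‖∫ u in (0 : ℝ)..(Set.projIcc 0 T hT r : ℝ), f u ∂(volume.restrict (Set.Ioc 0 T))‖ ≤ ‖f‖ := by
  rw [L1.norm_eq_integral_norm]
  refine (intervalIntegral.norm_integral_le_integral_norm_uIoc).trans ?_
  exact setIntegral_le_integral (L1.integrable_coeFn f).norm
    (Filter.Eventually.of_forall fun _ => norm_nonneg _)

open BoundedContinuousFunction ENNReal in
/-- The primitive operator from `L¹` to bounded continuous functions. -/
noncomputable def primOp {G : Type} [NormedAddCommGroup G] [NormedSpace ℝ G]
    (T : ℝ) (hT : 0 ≤ T) :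
    Lp G 1 (volume.restrict (Set.Ioc 0 T)) →L[ℝ] (ℝ →ᵇ G) :=
  LinearMap.mkContinuous
    { toFun := fun f => BoundedContinuousFunction.ofNormedAddCommGroup
        (fun r => ∫ u in (0 : ℝ)..(Set.projIcc 0 T hT r : ℝ), f u ∂(volume.restrict (Set.Ioc 0 T)))
        ((intervalIntegral.continuous_primitive
          (fun a b => (L1.integrable_coeFn f).intervalIntegrable) 0).comp
          (continuous_subtype_val.comp continuous_projIcc)) ‖f‖
        (prim_bound T hT f)
      map_add' := fun f h => by
        ext1 r
        simp only [BoundedContinuousFunction.coe_ofNormedAddCommGroup,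
          BoundedContinuousFunction.coe_add, Pi.add_apply]
        rw [← intervalIntegral.integral_add (L1.integrable_coeFn f).intervalIntegrable
          (L1.integrable_coeFn h).intervalIntegrable]
        apply intervalIntegral.integral_congr_ae
        filter_upwards [Lp.coeFn_add f h] with u hu _
        exact hu
      map_smul' := fun c f => by
        ext1 r
        simp only [BoundedContinuousFunction.coe_ofNormedAddCommGroup,
          BoundedContinuousFunction.coe_smul, RingHom.id_apply]
        rw [← intervalIntegral.integral_smul]
        apply intervalIntegral.integral_congr_ae
        filter_upwards [Lp.coeFn_smul c f] with u hu _
        exact hu } 1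
    (fun f => by
      rw [one_mul]
      exact BoundedContinuousFunction.norm_ofNormedAddCommGroup_le _ (norm_nonneg _)
        (prim_bound T hT f))

open BoundedContinuousFunction ENNReal in
lemma primOp_apply {G : Type} [NormedAddCommGroup G] [NormedSpace ℝ G]
    (T : ℝ) (hT : 0 ≤ T) (f : Lp G 1 (volume.restrict (Set.Ioc 0 T))) (r : ℝ) :
    primOp T hT f r = ∫ u in (0 : ℝ)..(Set.projIcc 0 T hT r : ℝ), f u := by
  change ∫ u in (0 : ℝ)..(Set.projIcc 0 T hT r : ℝ), f u ∂(volume.restrict (Set.Ioc 0 T)) = _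
  have h := (Set.projIcc 0 T hT r).2
  rw [intervalIntegral.integral_of_le h.1, intervalIntegral.integral_of_le h.1,
    Measure.restrict_restrict measurableSet_Ioc,
    Set.inter_eq_left.2 (Set.Ioc_subset_Ioc_right h.2)]

open BoundedContinuousFunction ENNReal in
lemma primOp_norm_le {G E : Type} [NormedAddCommGroup G] [NormedSpace ℝ G] [NormedAddCommGroup E]
    (T : ℝ) (hT : 0 ≤ T) (f : Lp G 1 (volume.restrict (Set.Ioc 0 T))) (h : ℝ →ᵇ E) (M : ℝ)
    (hf : ∀ᵐ u ∂(volume.restrict (Set.Ioc 0 T)), ‖f u‖ ≤ M * ‖h u‖) (r : ℝ) :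
    ‖primOp T hT f r‖ ≤ M * ∫ u in (0 : ℝ)..(Set.projIcc 0 T hT r : ℝ), ‖h u‖ := by
  rw [primOp_apply, ← intervalIntegral.integral_const_mul]
  have hr := (Set.projIcc 0 T hT r).2
  apply intervalIntegral.norm_integral_le_of_norm_le hr.1
  · filter_upwards [(ae_restrict_iff' measurableSet_Ioc).1 hf] with u hu hu'
    exact hu ⟨hu'.1, hu'.2.trans hr.2⟩
  · exact (continuous_const.mul h.continuous.norm).intervalIntegrable _ _

open BoundedContinuousFunction in
lemma picard_bound {E : Type} [NormedAddCommGroup E] (T : ℝ) (hT : 0 ≤ T) (M : ℝ) (hM : 0 ≤ M)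
    (v : ℕ → (ℝ →ᵇ E))
    (hv : ∀ n r, ‖v (n+1) r‖ ≤ M * ∫ u in (0 : ℝ)..(Set.projIcc 0 T hT r : ℝ), ‖v n u‖) (n : ℕ) :
    ∀ r ∈ Set.Icc 0 T, ‖v n r‖ ≤ ‖v 0‖ * ((M * r) ^ n / n.factorial) := by
  induction n with
  | zero => intro r _; simpa using (v 0).norm_coe_le_norm r
  | succ n ih =>
    intro r hr
    refine (hv n r).trans ?_
    rw [Set.projIcc_of_mem hT hr]
    have h1 : ∫ u in (0 : ℝ)..r, ‖v n u‖ ≤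
        ∫ u in (0 : ℝ)..r, ‖v 0‖ * M ^ n / n.factorial * u ^ n := by
      apply intervalIntegral.integral_mono_on hr.1
      · exact (v n).continuous.norm.intervalIntegrable _ _
      · exact (by fun_prop : Continuous fun u : ℝ => ‖v 0‖ * M ^ n / n.factorial * u ^ n).intervalIntegrable _ _
      · intro u hu
        refine (ih u ⟨hu.1, hu.2.trans hr.2⟩).trans (le_of_eq ?_)
        rw [mul_pow]; ring
    refine (mul_le_mul_of_nonneg_left h1 hM).trans (le_of_eq ?_)
    rw [intervalIntegral.integral_const_mul, integral_pow, Nat.factorial_succ]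
    push_cast
    have : (n.factorial : ℝ) ≠ 0 := by positivity
    have : (n : ℝ) + 1 ≠ 0 := by positivity
    field_simp
    simp
    try ring

open BoundedContinuousFunction in
lemma picard_bound' {E : Type} [NormedAddCommGroup E] (T : ℝ) (hT : 0 ≤ T) (M : ℝ) (hM : 0 ≤ M)
    (v : ℕ → (ℝ →ᵇ E))
    (hv : ∀ n r, ‖v (n+1) r‖ ≤ M * ∫ u in (0 : ℝ)..(Set.projIcc 0 T hT r : ℝ), ‖v n u‖) (n : ℕ) :
    ‖v (n+1)‖ ≤ (M * T) * ((M * T) ^ n / n.factorial) * ‖v 0‖ := by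
  rw [BoundedContinuousFunction.norm_le (by positivity)]
  intro r
  refine (hv n r).trans ?_
  have hr := (Set.projIcc 0 T hT r).2
  set p : ℝ := (Set.projIcc 0 T hT r : ℝ)
  have h1 : ∫ u in (0 : ℝ)..p, ‖v n u‖ ≤
        ∫ u in (0 : ℝ)..p, ‖v 0‖ * ((M * T) ^ n / n.factorial) := by
    apply intervalIntegral.integral_mono_on hr.1
    · exact (v n).continuous.norm.intervalIntegrable _ _
    · exact intervalIntegrable_const
    · intro u hu
      refine (picard_bound T hT M hM v hv n u ⟨hu.1, hu.2.trans hr.2⟩).trans ?_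
      have := hu.1
      have := hu.2.trans hr.2
      gcongr
  rw [intervalIntegral.integral_const, smul_eq_mul, sub_zero] at h1
  calc _ ≤ M * (T * (‖v 0‖ * ((M * T) ^ n / n.factorial))) := by
        gcongr; exact h1.trans (by gcongr; exact hr.2)
    _ = _ := by ring

lemma exists_small (a : ℝ) : ∃ n : ℕ, a * (a ^ n / n.factorial) < 1 := by
  have h := (FloorSemiring.tendsto_pow_div_factorial_atTop a).const_mul a
  rw [mul_zero] at h
  exact (h.eventually (gt_mem_nhds one_pos)).exists

open BoundedContinuousFunction in
lemma isUnit_volterra {E : Type} [NormedAddCommGroup E] [NormedSpace ℝ E] [CompleteSpace E]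
    (T : ℝ) (hT : 0 ≤ T) (M : ℝ) (hM : 0 ≤ M) (K : (ℝ →ᵇ E) →L[ℝ] (ℝ →ᵇ E))
    (hK : ∀ h r, ‖K h r‖ ≤ M * ∫ u in (0 : ℝ)..(Set.projIcc 0 T hT r : ℝ), ‖h u‖) :
    IsUnit (1 - K) := by
  obtain ⟨n, hn⟩ := exists_small (M * T)
  have h1 : ‖K ^ (n+1)‖ < 1 := by
    refine lt_of_le_of_lt (ContinuousLinearMap.opNorm_le_bound _ (by positivity) fun h => ?_) hn
    have := picard_bound' T hT M hM (fun i => (K ^ i) h) (fun i r => by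
      have := hK ((K ^ i) h) r
      rwa [← mul_apply_eq_comp, ← pow_succ'] at this) n
    simpa using this
  have h2 : IsUnit (1 - K ^ (n+1)) := isUnit_one_sub_of_norm_lt_one h1
  rw [← mul_neg_geom_sum] at h2
  have hc : Commute (1 - K) (∑ i ∈ Finset.range (n+1), K ^ i) := by
    rw [Commute, SemiconjBy, mul_neg_geom_sum, geom_sum_mul_neg]
  exact (hc.isUnit_mul_iff.1 h2).1

open BoundedContinuousFunction in
lemma eq_zero_volterra {E : Type} [NormedAddCommGroup E]
    (T : ℝ) (hT : 0 ≤ T) (M : ℝ) (hM : 0 ≤ M) (h : ℝ →ᵇ E)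
    (hK : ∀ r, ‖h r‖ ≤ M * ∫ u in (0 : ℝ)..(Set.projIcc 0 T hT r : ℝ), ‖h u‖) :
    h = 0 := by
  obtain ⟨n, hn⟩ := exists_small (M * T)
  have := picard_bound' T hT M hM (fun _ => h) (fun _ r => hK r) n
  rw [← norm_le_zero_iff]
  by_contra! hc
  nlinarith

open BoundedContinuousFunction in
/-- Constant functions, as a continuous linear map. -/
noncomputable def constOp (E : Type) [NormedAddCommGroup E] [NormedSpace ℝ E] :
    E →L[ℝ] (ℝ →ᵇ E) :=
  LinearMap.mkContinuous
    { toFun := fun x => BoundedContinuousFunction.const ℝ x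
      map_add' := fun _ _ => rfl
      map_smul' := fun _ _ => rfl } 1
    (fun x => by rw [one_mul]; exact BoundedContinuousFunction.norm_const_le x)

set_option maxHeartbeats 2000000 in
/-- If `b` has linear growth and is `k` times continuously
differentiable in space with all spatial derivatives of order `1, …, k` bounded by `M`,
then for every `t ∈ [0,T]` the flow map `x ↦ φ_{0,t}(x)` is `k` times continuously
differentiable on `ℝ^d`. -/
theorem flow_contDiff
    (T : ℝ) (hT : 0 < T) (d : ℕ) (hd : 1 ≤ d) (k : ℕ) (hk : 1 ≤ k)
    (b : ℝ → EuclideanSpace ℝ (Fin d) → EuclideanSpace ℝ (Fin d))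
    (hbmeas : Measurable (Function.uncurry b))
    (M C₀ : ℝ) (hM : 0 < M) (hC₀ : 0 < C₀)
    (hbgrowth : ∀ t ∈ Set.Icc (0 : ℝ) T, ∀ y : EuclideanSpace ℝ (Fin d),
      ‖b t y‖ ≤ C₀ * (1 + ‖y‖))
    (hbCk : ∀ t ∈ Set.Icc (0 : ℝ) T, ContDiff ℝ k (b t))
    (hDb : ∀ j : ℕ, 1 ≤ j → j ≤ k → ∀ t ∈ Set.Icc (0 : ℝ) T,
      ∀ x : EuclideanSpace ℝ (Fin d), ‖iteratedFDeriv ℝ j (b t) x‖ ≤ M)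
    (hDbmeas : ∀ j : ℕ, j ≤ k → StronglyMeasurable
      (fun p : ℝ × EuclideanSpace ℝ (Fin d) => iteratedFDeriv ℝ j (b p.1) p.2))
    (w : ℝ → EuclideanSpace ℝ (Fin d))
    (hw : ContinuousOn w (Set.Icc (0 : ℝ) T)) (hw0 : w 0 = 0)
    (φ : ℝ → EuclideanSpace ℝ (Fin d) → EuclideanSpace ℝ (Fin d))
    (hφ : ∀ x : EuclideanSpace ℝ (Fin d),
      ContinuousOn (fun r => φ r x) (Set.Icc (0 : ℝ) T) ∧
      ∀ r ∈ Set.Icc (0 : ℝ) T, φ r x = x + (∫ u in (0 : ℝ)..r, b u (φ u x)) + w r) :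
    ∀ t ∈ Set.Icc (0 : ℝ) T, ContDiff ℝ k (φ t) := by
  classical
  have hT0 : (0 : ℝ) ≤ T := hT.le
  let μ : Measure ℝ := volume.restrict (Set.Ioc 0 T)
  have hμ : ∀ᵐ u ∂μ, u ∈ Set.Icc (0 : ℝ) T := by
    filter_upwards [ae_restrict_mem measurableSet_Ioc] with u hu
    exact Set.Ioc_subset_Icc_self hu
  have hmem : ∀ j, 1 ≤ j → j ≤ k → ∀ y : BoundedContinuousFunction ℝ (EuclideanSpace ℝ (Fin d)),
      MemLp (fun u => iteratedFDeriv ℝ j (b u) (y u)) 1 μ := by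
    intro j h1 hj y
    refine MemLp.of_bound (C := M) ?_ ?_
    · exact ((hDbmeas j hj).comp_measurable
        (measurable_id.prodMk y.continuous.measurable)).aestronglyMeasurable
    · filter_upwards [hμ] with u hu
      exact hDb j h1 hj u hu _
  have hmem0 : ∀ y : BoundedContinuousFunction ℝ (EuclideanSpace ℝ (Fin d)),
      MemLp (fun u => b u (y u)) 1 μ := by
    intro y
    refine MemLp.of_bound (C := C₀ * (1 + ‖y‖)) ?_ ?_
    · exact (hbmeas.comp (measurable_id.prodMk y.continuous.measurable)).aestronglyMeasurable
    · filter_upwards [hμ] with u hu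
      refine (hbgrowth u hu _).trans ?_
      gcongr
      exact y.norm_coe_le_norm u
  -- regularity of the derivative superposition operators
  have hCD : ∀ m j : ℕ, ∀ (h1 : 1 ≤ j) (hj : j + m = k), ContDiff ℝ m
      (fun y => (hmem j h1 (by omega) y).toLp _) := by
    intro m
    induction m with
    | zero =>
      intro j h1 hj
      rw [Nat.cast_zero, contDiff_zero]
      refine nem_continuous μ (fun u => iteratedFDeriv ℝ j (b u)) M _ ?_ ?_
      · filter_upwards [hμ] with u hu
        exact (hbCk u hu).continuous_iteratedFDeriv (by exact_mod_cast (by omega : j ≤ k))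
      · filter_upwards [hμ] with u hu x
        exact hDb j h1 (by omega) u hu x
    | succ m ih =>
      intro j h1 hj
      push_cast
      rw [contDiff_succ_iff_hasFDerivAt]
      refine ⟨_, ?_, fun y => nem_hasFDerivAt μ (fun u => iteratedFDeriv ℝ j (b u))
        (fun u => iteratedFDeriv ℝ (j+1) (b u))
        ((continuousMultilinearCurryLeftEquiv ℝ (fun _ : Fin (j + 1) => EuclideanSpace ℝ (Fin d))
          (EuclideanSpace ℝ (Fin d))).toContinuousLinearEquiv :
          _ →L[ℝ] _) M _ (hmem (j+1) (by omega) (by omega)) ?_ ?_ y⟩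
      · refine ContDiff.clm_comp ?_ contDiff_const
        exact (ContinuousLinearMap.contDiff _).comp (ih (j+1) (by omega) (by omega))
      · filter_upwards [hμ] with u hu x
        have hd : DifferentiableAt ℝ (iteratedFDeriv ℝ j (b u)) x :=
          ((hbCk u hu).differentiable_iteratedFDeriv
            (by exact_mod_cast (by omega : j < k))) x
        exact hd.hasFDerivAt
      · filter_upwards [hμ] with u hu x
        refine le_trans (le_of_eq ?_) (hDb (j+1) (by omega) (by omega) u hu x)
        exact LinearIsometryEquiv.norm_map _ _
  -- the superposition operator of `b`
  let L₁ : (ContinuousMultilinearMap ℝ (fun _ : Fin 1 => EuclideanSpace ℝ (Fin d))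
      (EuclideanSpace ℝ (Fin d))) →L[ℝ]
      (EuclideanSpace ℝ (Fin d) →L[ℝ] EuclideanSpace ℝ (Fin d)) :=
    ((continuousMultilinearCurryFin1 ℝ (EuclideanSpace ℝ (Fin d))
      (EuclideanSpace ℝ (Fin d))).toContinuousLinearEquiv : _ →L[ℝ] _)
  have hfd : ∀ u ∈ Set.Icc (0:ℝ) T, ∀ x,
      HasFDerivAt (b u) (L₁ (iteratedFDeriv ℝ 1 (b u) x)) x := by
    intro u hu x
    have hd : DifferentiableAt ℝ (b u) x :=
      ((hbCk u hu).differentiable (by exact_mod_cast (by omega : k ≠ 0))) x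
    have : L₁ (iteratedFDeriv ℝ 1 (b u) x) = fderiv ℝ (b u) x := by
      ext1 v
      change iteratedFDeriv ℝ 1 (b u) x _ = _
      rw [iteratedFDeriv_one_apply]
      rfl
    rw [this]
    exact hd.hasFDerivAt
  have hfb : ∀ u ∈ Set.Icc (0:ℝ) T, ∀ x, ‖L₁ (iteratedFDeriv ℝ 1 (b u) x)‖ ≤ M := by
    intro u hu x
    refine le_trans (le_of_eq ?_) (hDb 1 le_rfl hk u hu x)
    exact LinearIsometryEquiv.norm_map _ _
  have hlip : ∀ u ∈ Set.Icc (0:ℝ) T, ∀ x y, ‖b u x - b u y‖ ≤ M * ‖x - y‖ := by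
    intro u hu x y
    exact convex_univ.norm_image_sub_le_of_norm_hasFDerivWithin_le
        (fun x _ => (hfd u hu x).hasFDerivWithinAt) (fun x _ => hfb u hu x)
        (Set.mem_univ _) (Set.mem_univ _)
  let N := fun y => (hmem0 y).toLp _
  let A := fun y => ((L₁.holderL μ 1 ⊤ 1) ((hmem 1 le_rfl hk y).toLp _)).comp
        (BoundedContinuousFunction.toLp (E := EuclideanSpace ℝ (Fin d)) ⊤ μ ℝ)
  have hNd : ∀ y, HasFDerivAt N (A y) y := fun y =>
    nem_hasFDerivAt μ b (fun u => iteratedFDeriv ℝ 1 (b u)) L₁ M hmem0 (hmem 1 le_rfl hk)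
      (hμ.mono hfd) (hμ.mono hfb) y
  have hNC : ContDiff ℝ k N := by
    obtain ⟨m, rfl⟩ : ∃ m, k = m + 1 := ⟨k - 1, by omega⟩
    push_cast
    rw [contDiff_succ_iff_hasFDerivAt]
    refine ⟨A, ?_, hNd⟩
    refine ContDiff.clm_comp ?_ contDiff_const
    exact (ContinuousLinearMap.contDiff _).comp (hCD m 1 le_rfl (by omega))
  let J := primOp (G := EuclideanSpace ℝ (Fin d)) T hT0
  let F := fun y => y - J (N y)
  have hFC : ContDiff ℝ k F := contDiff_id.sub (J.contDiff.comp hNC)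
  have hFd : ∀ y, HasFDerivAt F (1 - J.comp (A y)) y := fun y =>
    (hasFDerivAt_id y).sub (J.hasFDerivAt.comp y (hNd y))
  have hunit : ∀ y, IsUnit (1 - J.comp (A y)) := by
    intro y
    refine isUnit_volterra T hT0 M hM.le _ fun h r => ?_
    refine primOp_norm_le T hT0 _ h M ?_ r
    filter_upwards [hμ, (hmem 1 le_rfl hk y).coeFn_toLp,
      L₁.coeFn_holder (r := 1) ((hmem 1 le_rfl hk y).toLp _)
        (BoundedContinuousFunction.toLp ⊤ μ ℝ h),
      BoundedContinuousFunction.coeFn_toLp (p := ⊤) (μ := μ) ℝ h] with u hu h1 h2 h3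
    have : (A y h : ℝ → EuclideanSpace ℝ (Fin d)) u =
        L₁ (iteratedFDeriv ℝ 1 (b u) (y u)) (h u) := by
      rw [← h1, ← h3]; exact h2
    change ‖(A y h : ℝ → EuclideanSpace ℝ (Fin d)) u‖ ≤ _
    rw [this]
    refine (ContinuousLinearMap.le_opNorm _ _).trans ?_
    gcongr
    exact hfb u hu _
  have hinj : Function.Injective F := by
    intro y z hyz
    have h1 : y - z = J (N y - N z) := by
      rw [map_sub]
      have h2 : y - J (N y) = z - J (N z) := hyz
      rw [sub_eq_sub_iff_add_eq_add] at h2 ⊢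
      rw [h2, add_comm]
    rw [← sub_eq_zero]
    refine eq_zero_volterra T hT0 M hM.le _ fun r => ?_
    conv_lhs => rw [h1]
    refine primOp_norm_le T hT0 _ (y - z) M ?_ r
    filter_upwards [hμ, Lp.coeFn_sub (N y) (N z), (hmem0 y).coeFn_toLp,
      (hmem0 z).coeFn_toLp] with u hu h1 h2 h3
    rw [h1, Pi.sub_apply]
    change ‖(hmem0 y).toLp _ u - (hmem0 z).toLp _ u‖ ≤ _
    rw [h2, h3]
    exact hlip u hu _ _
  -- the extended solution
  have hext : ∀ f : ℝ → EuclideanSpace ℝ (Fin d), ContinuousOn f (Set.Icc 0 T) →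
      ∃ y : BoundedContinuousFunction ℝ (EuclideanSpace ℝ (Fin d)),
        ∀ r, y r = f (Set.projIcc 0 T hT0 r) := by
    intro f hf
    have hc : Continuous (fun r => f (Set.projIcc 0 T hT0 r)) :=
      (continuousOn_iff_continuous_domRestrict.1 hf).comp continuous_projIcc
    obtain ⟨C, hC⟩ := isCompact_Icc.exists_bound_of_continuousOn hf
    exact ⟨BoundedContinuousFunction.ofNormedAddCommGroup _ hc C
      (fun r => hC _ (Set.projIcc 0 T hT0 r).2), fun r => rfl⟩
  choose y hy using fun x => hext _ (hφ x).1
  obtain ⟨W, hW⟩ := hext w hw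
  have hFy : ∀ x, F (y x) = constOp _ x + W := by
    intro x
    ext1 r
    change y x r - J (N (y x)) r = x + W r
    rw [sub_eq_iff_eq_add, hy, hW, primOp_apply]
    have hr := (Set.projIcc 0 T hT0 r).2
    rw [(hφ x).2 _ hr, add_right_comm]
    congr 1
    apply intervalIntegral.integral_congr_ae
    filter_upwards [(ae_restrict_iff' measurableSet_Ioc).1 (hmem0 (y x)).coeFn_toLp] with u hu hu'
    rw [Set.uIoc_of_le hr.1] at hu'
    have hu2 : u ∈ Set.Ioc 0 T := ⟨hu'.1, hu'.2.trans hr.2⟩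
    refine Eq.trans ?_ (hu hu2).symm
    rw [hy, Set.projIcc_of_mem hT0 (Set.Ioc_subset_Icc_self hu2)]
  intro t ht
  rw [contDiff_iff_contDiffAt]
  intro x₀
  have hk0 : (k : WithTop ℕ∞) ≠ 0 := by exact_mod_cast (by omega : k ≠ 0)
  obtain ⟨U, hU⟩ := hunit (y x₀)
  let e := ContinuousLinearEquiv.unitsEquiv ℝ _ U
  have he : HasFDerivAt F (e : _ →L[ℝ] _) (y x₀) := by
    have := hFd (y x₀)
    rw [← hU] at this
    exact this
  have hloc := (hFC.contDiffAt (x := y x₀)).to_localInverse he hk0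
  have hright := ((hFC.contDiffAt (x := y x₀)).hasStrictFDerivAt' he hk0).eventually_right_inverse
  rw [hFy] at hloc hright
  have haff : ContDiff ℝ k (fun x => constOp (EuclideanSpace ℝ (Fin d)) x + W) :=
    (constOp (EuclideanSpace ℝ (Fin d))).contDiff.add contDiff_const
  have hcomp := (BoundedContinuousFunction.evalCLM ℝ t).contDiff.contDiffAt.comp x₀
    (hloc.comp x₀ haff.contDiffAt)
  refine hcomp.congr_of_eventuallyEq ?_
  filter_upwards [haff.continuous.continuousAt.eventually hright] with x hx
  rw [← hFy] at hx
  have := hinj hx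
  have h2 : φ t x = y x t := by rw [hy, Set.projIcc_of_mem hT0 ht]
  rw [h2]
  conv_lhs => rw [← this]
  rw [hFy]
  rfl
end
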